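/- arXiv:1106.0404 — 2 statements merged into one kernel-verified Lean document; each statement's English description precedes it below -/
import Mathlib

section
/- Let F be a subfunctor of V that preserves intersections and such that F(Z) is a convex subset of the real vector space of all functionals C(Z) → ℝ for every compact Hausdorff space Z. Then F is strongly convex: for every compact Hausdorff space X and every closed nonempty A ⊆ X, every element of F(X) that lies in the affine hull of V(i_A)(F(A)) (taken in the vector space of all functionals C(X) → ℝ) already lies in V(i_A)(F(A)); equivalently, (F(X) \ F(A)) ∩ aff F(A) = ∅. -/
open Topology

universe u

/-- `V(X)`: the set of all functionals `ν : C(X, ℝ) → ℝ` (not assumed linear or continuous)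
with `min φ(X) ≤ ν(φ) ≤ max φ(X)` for every `φ ∈ C(X)`. -/
def VSet (X : Type u) [TopologicalSpace X] : Set (C(X, ℝ) → ℝ) :=
  {ν | ∀ φ : C(X, ℝ), sInf (Set.range φ) ≤ ν φ ∧ ν φ ≤ sSup (Set.range φ)}

/-- `V(f)(ν)(ψ) = ν(ψ ∘ f)` for a continuous map `f : X → Y`. -/
def Vmap {X Y : Type u} [TopologicalSpace X] [TopologicalSpace Y] (f : C(X, Y))
    (ν : C(X, ℝ) → ℝ) : C(Y, ℝ) → ℝ :=
  fun ψ => ν (ψ.comp f)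

/-- The inclusion of a subset `B ⊆ X` as a continuous map. -/
def inclCM {X : Type u} [TopologicalSpace X] (B : Set X) : C(B, X) :=
  ⟨Subtype.val, continuous_subtype_val⟩

/-- A subfunctor `F` of the functor `V`: an assignment of a subset `F(X) ⊆ V(X)` to every
compact Hausdorff space `X` such that `V(f)(F(X)) ⊆ F(Y)` for every continuous `f : X → Y`. -/
structure VSubfunctor : Type (u + 1) where
  carrier : ∀ (X : Type u) [TopologicalSpace X] [CompactSpace X] [T2Space X],
    Set (C(X, ℝ) → ℝ)
  subset_V : ∀ (X : Type u) [TopologicalSpace X] [CompactSpace X] [T2Space X],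
    carrier X ⊆ VSet X
  map_mem : ∀ (X Y : Type u) [TopologicalSpace X] [CompactSpace X] [T2Space X]
    [TopologicalSpace Y] [CompactSpace Y] [T2Space Y] (f : C(X, Y)) (ν : C(X, ℝ) → ℝ),
    ν ∈ carrier X → Vmap f ν ∈ carrier Y

/-- `F(B)`, identified with its copy `V(i_B)(F(B)) ⊆ F(X)`, for a closed subset `B` of a
compact Hausdorff space `X`. -/
def VSubfunctor.sub (F : VSubfunctor.{u}) (X : Type u) [TopologicalSpace X] [CompactSpace X]
    [T2Space X] (B : Set X) (hB : IsClosed B) : Set (C(X, ℝ) → ℝ) :=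
  haveI : CompactSpace B := isCompact_iff_compactSpace.mp hB.isCompact
  Vmap (inclCM B) '' F.carrier ↥B

/-- A subfunctor `F` of `V` preserves intersections if `F(⋂ᵢ Sᵢ) = ⋂ᵢ F(Sᵢ)` (under the
identifications above) for every (nonempty) family of closed subsets of a compact Hausdorff
space. -/
def VSubfunctor.PreservesIntersections (F : VSubfunctor.{u}) : Prop :=
  ∀ (X : Type u) [TopologicalSpace X] [CompactSpace X] [T2Space X]
    (ι : Type u) [Nonempty ι] (S : ι → Set X) (hS : ∀ i, IsClosed (S i)),
    F.sub X (⋂ i, S i) (isClosed_iInter hS) = ⋂ i, F.sub X (S i) (hS i)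

/-!
Let `ν ∈ F(X)` lie in the linear span of `F(A)`. Then `ν(φ)` depends only on `φ|_A`. Realise `A`
as the fibre `q⁻¹(1)` of a continuous map `q` into a cube. The graph of `q` and the slice
`X × {1}` are two copies of `X` inside `X × cube` that meet exactly over `A`, so both embeddings
push `ν` to the same functional. It lies in `F` of each copy, hence in `F` of their intersection,
and projecting back to `X` puts `ν` in `F(A)`.
-/

open Set unitInterval

/-- The functionals supported on `A`: those for which `ν φ` depends only on the restriction of `φ`
to `A`. They are bundled as a submodule so that linear (hence affine) combinations of functionals
in `F(A)` are seen to be supported on `A`. -/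
def supportedOn {X : Type*} [TopologicalSpace X] (A : Set X) : Submodule ℝ (C(X, ℝ) → ℝ) where
  carrier := {ν | ∀ φ ψ : C(X, ℝ), EqOn φ ψ A → ν φ = ν ψ}
  add_mem' hμ hν φ ψ h := congrArg₂ (· + ·) (hμ φ ψ h) (hν φ ψ h)
  zero_mem' _ _ _ := rfl
  smul_mem' c _ hν φ ψ h := congrArg (c * ·) (hν φ ψ h)

theorem vmap_eq_vmap_of_mem_supportedOn {X Y : Type u} [TopologicalSpace X] [TopologicalSpace Y]
    {A : Set X} {ν : C(X, ℝ) → ℝ} (hν : ν ∈ supportedOn A) {f g : C(X, Y)} (hfg : EqOn f g A) :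
    Vmap f ν = Vmap g ν :=
  funext fun ψ => hν _ _ fun _ hx => congrArg ψ (hfg hx)

theorem exists_continuousMap_cube_preimage_one_eq {X : Type u} [TopologicalSpace X]
    [CompletelyRegularSpace X] {A : Set X} (hA : IsClosed A) :
    ∃ (ι : Type u) (q : C(X, ι → I)), q ⁻¹' {1} = A := by
  choose f hf_cont hf_zero hf_one using fun a : ↥Aᶜ =>
    CompletelyRegularSpace.completely_regular a.1 A hA a.2
  refine ⟨↥Aᶜ, ⟨fun x a => f a x, continuous_pi hf_cont⟩, Subset.antisymm (fun x hx => ?_) ?_⟩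
  · by_contra hxA
    have hfx : f ⟨x, hxA⟩ x = 1 := congrFun hx ⟨x, hxA⟩
    exact zero_ne_one ((hf_zero ⟨x, hxA⟩).symm.trans hfx)
  · exact fun x hx => funext fun a => hf_one a hx

namespace VSubfunctor

/-- `F(B ∩ C) = F(B) ∩ F(C)` for closed subsets `B`, `C` of a compact Hausdorff space: the binary
form of `PreservesIntersections`. -/
def PreservesBinaryIntersections (F : VSubfunctor.{u}) : Prop :=
  ∀ (X : Type u) [TopologicalSpace X] [CompactSpace X] [T2Space X] (B C : Set X)
    (hB : IsClosed B) (hC : IsClosed C),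
    F.sub X (B ∩ C) (hB.inter hC) = F.sub X B hB ∩ F.sub X C hC

theorem PreservesIntersections.preservesBinaryIntersections {F : VSubfunctor.{u}}
    (hF : F.PreservesIntersections) : F.PreservesBinaryIntersections := by
  intro X _ _ _ B C hB hC
  let S : ULift.{u} Bool → Set X := fun b => cond b.down B C
  have hS : ∀ b, IsClosed (S b) := by rintro ⟨_ | _⟩ <;> assumption
  have hBC : B ∩ C = ⋂ b, S b := by
    ext x
    simp [S, and_comm]
  have hsub : F.sub X B hB ∩ F.sub X C hC = ⋂ b, F.sub X (S b) (hS b) := by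
    ext μ
    simp [S, and_comm]
  rw [hsub, ← hF X (ULift.{u} Bool) S hS]
  congr 1

variable (F : VSubfunctor.{u}) {X Y : Type u} [TopologicalSpace X] [CompactSpace X] [T2Space X]
  [TopologicalSpace Y] [CompactSpace Y] [T2Space Y]

theorem sub_subset_supportedOn {A : Set X} (hA : IsClosed A) :
    F.sub X A hA ⊆ (supportedOn A : Set (C(X, ℝ) → ℝ)) := by
  rintro _ ⟨η, -, rfl⟩ φ ψ h
  exact congrArg η (ContinuousMap.ext fun x => h x.2)

theorem vmap_mem_sub_of_range_subset (f : C(X, Y)) {B : Set Y} (hB : IsClosed B)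
    (hf : range f ⊆ B) {ν : C(X, ℝ) → ℝ} (hν : ν ∈ F.carrier X) :
    Vmap f ν ∈ F.sub Y B hB := by
  have : CompactSpace B := isCompact_iff_compactSpace.mp hB.isCompact
  let f' : C(X, B) := ⟨codRestrict f B (range_subset_iff.mp hf), by fun_prop⟩
  exact ⟨Vmap f' ν, F.map_mem X B f' ν hν, rfl⟩

theorem vmap_mem_sub_of_mapsTo (f : C(X, Y)) {A : Set X} (hA : IsClosed A) {B : Set Y}
    (hB : IsClosed B) (hf : MapsTo f A B) {ν : C(X, ℝ) → ℝ} (hν : ν ∈ F.sub X A hA) :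
    Vmap f ν ∈ F.sub Y B hB := by
  have : CompactSpace A := isCompact_iff_compactSpace.mp hA.isCompact
  obtain ⟨η, hη, rfl⟩ := hν
  exact F.vmap_mem_sub_of_range_subset (f.comp (inclCM A)) hB
    (range_subset_iff.mpr fun x => hf x.2) hη

variable {F}

theorem vmap_mem_sub_range_inter_range (hF : F.PreservesBinaryIntersections) {f g : C(X, Y)}
    {ν : C(X, ℝ) → ℝ} (hν : ν ∈ F.carrier X) (hfg : Vmap f ν = Vmap g ν) :
    Vmap f ν ∈ F.sub Y (range f ∩ range g)
      (f.continuous.isClosedMap.isClosed_range.inter g.continuous.isClosedMap.isClosed_range) := by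
  have hmem_f := F.vmap_mem_sub_of_range_subset f f.continuous.isClosedMap.isClosed_range
    Subset.rfl hν
  have hmem_g := F.vmap_mem_sub_of_range_subset g g.continuous.isClosedMap.isClosed_range
    Subset.rfl hν
  exact (hF Y _ _ _ _).ge ⟨hmem_f, hfg ▸ hmem_g⟩

theorem mem_sub_of_mem_supportedOn (hF : F.PreservesBinaryIntersections) {A : Set X}
    (hA : IsClosed A) {ν : C(X, ℝ) → ℝ} (hν : ν ∈ F.carrier X) (hνA : ν ∈ supportedOn A) :
    ν ∈ F.sub X A hA := by
  obtain ⟨ι, q, rfl⟩ := exists_continuousMap_cube_preimage_one_eq hA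
  let graph : C(X, X × (ι → I)) := (ContinuousMap.id X).prodMk q
  let slice : C(X, X × (ι → I)) := (ContinuousMap.id X).prodMk (ContinuousMap.const X 1)
  have hgs : EqOn graph slice (q ⁻¹' {1}) := fun x hx => Prod.ext rfl hx
  have hmem := vmap_mem_sub_range_inter_range hF hν (vmap_eq_vmap_of_mem_supportedOn hνA hgs)
  have hfst : MapsTo ContinuousMap.fst (range graph ∩ range slice) (q ⁻¹' {1}) := by
    rintro _ ⟨⟨x, rfl⟩, ⟨y, hy⟩⟩
    exact (congrArg Prod.snd hy).symm
  exact F.vmap_mem_sub_of_mapsTo ContinuousMap.fst _ hA hfst hmem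

end VSubfunctor

theorem stmt13_general {F : VSubfunctor.{u}} (hF : F.PreservesBinaryIntersections)
    {X : Type u} [TopologicalSpace X] [CompactSpace X] [T2Space X] {A : Set X} (hA : IsClosed A)
    {ν : C(X, ℝ) → ℝ} (hν : ν ∈ F.carrier X) (hspan : ν ∈ Submodule.span ℝ (F.sub X A hA)) :
    ν ∈ F.sub X A hA :=
  VSubfunctor.mem_sub_of_mem_supportedOn hF hA hν
    (Submodule.span_le.mpr (F.sub_subset_supportedOn hA) hspan)

/-- every convex subfunctor `F` of `V` which preserves intersections is strongly
convex: for every compact Hausdorff `X` and closed nonempty `A ⊆ X`, every element of `F(X)`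
lying in the affine hull of `F(A) = V(i_A)(F(A))` (taken in the real vector space of all
functionals `C(X) → ℝ`) already lies in `F(A)`; i.e. `(F(X) \ F(A)) ∩ aff F(A) = ∅`. -/
theorem stmt13 (F : VSubfunctor.{u}) (hint : F.PreservesIntersections)
    (hconv : ∀ (Z : Type u) [TopologicalSpace Z] [CompactSpace Z] [T2Space Z],
      Convex ℝ (F.carrier Z))
    (X : Type u) [TopologicalSpace X] [CompactSpace X] [T2Space X]
    (A : Set X) (hA : IsClosed A) (hne : A.Nonempty)
    (ν : C(X, ℝ) → ℝ) (hν : ν ∈ F.carrier X)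
    (haff : ν ∈ affineSpan ℝ (F.sub X A hA)) :
    ν ∈ F.sub X A hA :=
  stmt13_general hint.preservesBinaryIntersections hA hν (affineSpan_subset_span haff)
end

section
/- Let X = {x, y, s, t} be a four-point discrete space and A = {φ : X → ℝ : φ(s) = φ(t)}. Define ν : A → ℝ by: ν(φ) = min{φ(x), φ(y)} if φ(x) ≥ 0 and φ(y) ≥ 0; ν(φ) = max{φ(x), φ(y)} if φ(x) ≤ 0 and φ(y) ≤ 0; and ν(φ) = 0 otherwise. Then ν is non-expanding on A, i.e. |ν(φ) − ν(ψ)| ≤ max_{p ∈ X} |φ(p) − ψ(p)| for all φ, ψ ∈ A, and moreover min_{p ∈ X} φ(p) ≤ ν(φ) ≤ max_{p ∈ X} φ(p) for all φ ∈ A. -/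
open Topology

/-- The functional `ν` on `A = {φ : X → ℝ : φ(s) = φ(t)}`, where `X = {x, y, s, t}` is the
four-point discrete space (encoded as `Fin 4` with `x = 0`, `y = 1`, `s = 2`, `t = 3`):
`ν(φ) = min {φ(x), φ(y)}` if `φ(x), φ(y) ≥ 0`; `ν(φ) = max {φ(x), φ(y)}` if
`φ(x), φ(y) ≤ 0`; and `ν(φ) = 0` otherwise. -/
noncomputable def nu0 (φ : Fin 4 → ℝ) : ℝ :=
  if 0 ≤ φ 0 ∧ 0 ≤ φ 1 then min (φ 0) (φ 1)
  else if φ 0 ≤ 0 ∧ φ 1 ≤ 0 then max (φ 0) (φ 1)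
  else 0

/-!
`ν(φ)` is the median of the three numbers `φ(x)`, `φ(y)` and `0`. The median of three numbers is
monotone and commutes with adding a constant to all of them, so it is non-expanding for the
sup-norm; and it lies between the minimum and the maximum of any two of them.
-/

section Lattice

variable {α : Type*} [Lattice α] {a b c a' b' c' : α}

/-- The median of three elements, used to describe `ν` without case distinctions. Of the equivalent
expressions available in a distributive lattice, this one singles out the first two arguments, so
that the bounds by `a ⊓ b` and `a ⊔ b` hold in every lattice. -/
def median (a b c : α) : α :=
  (a ⊓ b) ⊔ ((a ⊔ b) ⊓ c)

theorem median_comm_left (a b c : α) : median a b c = median b a c := by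
  rw [median, median, inf_comm a, sup_comm a]

theorem inf_le_median (a b c : α) : a ⊓ b ≤ median a b c :=
  le_sup_left

theorem median_le_sup (a b c : α) : median a b c ≤ a ⊔ b :=
  sup_le inf_le_sup inf_le_left

theorem median_mono (ha : a ≤ a') (hb : b ≤ b') (hc : c ≤ c') :
    median a b c ≤ median a' b' c' :=
  sup_le_sup (inf_le_inf ha hb) (inf_le_inf (sup_le_sup ha hb) hc)

theorem median_eq_inf (ha : c ≤ a) (hb : c ≤ b) : median a b c = a ⊓ b := by
  rw [median, inf_eq_right.2 (le_sup_of_le_left ha), sup_eq_left.2 (le_inf ha hb)]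

theorem median_eq_sup (ha : a ≤ c) (hb : b ≤ c) : median a b c = a ⊔ b := by
  rw [median, inf_eq_left.2 (sup_le ha hb), sup_eq_right.2 inf_le_sup]

theorem median_eq_right (ha : a ≤ c) (hb : c ≤ b) : median a b c = c := by
  rw [median, inf_eq_right.2 (le_sup_of_le_right hb), sup_eq_right.2 (inf_le_of_left_le ha)]

end Lattice

section LatticeOrderedGroup

variable {α : Type*} [Lattice α] [AddCommGroup α] [AddLeftMono α] {a b c a' b' c' d : α}

theorem median_add_right (a b c d : α) :
    median (a + d) (b + d) (c + d) = median a b c + d := by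
  simp only [median, inf_add, sup_add]

theorem median_sub_median_le (ha : a - a' ≤ d) (hb : b - b' ≤ d) (hc : c - c' ≤ d) :
    median a b c - median a' b' c' ≤ d := by
  rw [sub_le_iff_le_add'] at ha hb hc ⊢
  exact (median_mono ha hb hc).trans_eq (median_add_right a' b' c' d)

theorem abs_median_sub_median_le (ha : |a - a'| ≤ d) (hb : |b - b'| ≤ d) (hc : |c - c'| ≤ d) :
    |median a b c - median a' b' c'| ≤ d := by
  rw [abs_le', neg_sub] at ha hb hc ⊢
  exact ⟨median_sub_median_le ha.1 hb.1 hc.1, median_sub_median_le ha.2 hb.2 hc.2⟩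

end LatticeOrderedGroup

theorem nu0_eq_median (φ : Fin 4 → ℝ) : nu0 φ = median (φ 0) (φ 1) 0 := by
  unfold nu0
  split_ifs with hnonneg hnonpos
  · exact (median_eq_inf hnonneg.1 hnonneg.2).symm
  · exact (median_eq_sup hnonpos.1 hnonpos.2).symm
  · rcases le_total (φ 0) 0 with h0 | h0 <;> rcases le_total (φ 1) 0 with h1 | h1
    · exact absurd ⟨h0, h1⟩ hnonpos
    · exact (median_eq_right h0 h1).symm
    · rw [median_comm_left, median_eq_right h1 h0]
    · exact absurd ⟨h0, h1⟩ hnonneg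

theorem abs_nu0_sub_nu0_le (φ ψ : Fin 4 → ℝ) : |nu0 φ - nu0 ψ| ≤ ⨆ p, |φ p - ψ p| := by
  have hle (p : Fin 4) : |φ p - ψ p| ≤ ⨆ p, |φ p - ψ p| :=
    Finite.le_ciSup (fun p => |φ p - ψ p|) p
  have hzero : |(0 : ℝ) - 0| ≤ ⨆ p, |φ p - ψ p| := by
    simpa only [sub_self, abs_zero] using (abs_nonneg _).trans (hle 0)
  rw [nu0_eq_median, nu0_eq_median]
  exact abs_median_sub_median_le (hle 0) (hle 1) hzero

theorem iInf_le_nu0 (φ : Fin 4 → ℝ) : ⨅ p, φ p ≤ nu0 φ := by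
  rw [nu0_eq_median]
  exact (le_inf (Finite.ciInf_le φ 0) (Finite.ciInf_le φ 1)).trans (inf_le_median _ _ _)

theorem nu0_le_iSup (φ : Fin 4 → ℝ) : nu0 φ ≤ ⨆ p, φ p := by
  rw [nu0_eq_median]
  exact (median_le_sup _ _ _).trans (sup_le (Finite.le_ciSup φ 0) (Finite.le_ciSup φ 1))

theorem stmt15_general :
    (∀ φ ψ : Fin 4 → ℝ, |nu0 φ - nu0 ψ| ≤ ⨆ p, |φ p - ψ p|) ∧
    (∀ φ : Fin 4 → ℝ, (⨅ p, φ p) ≤ nu0 φ ∧ nu0 φ ≤ ⨆ p, φ p) :=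
  ⟨abs_nu0_sub_nu0_le, fun φ => ⟨iInf_le_nu0 φ, nu0_le_iSup φ⟩⟩

/-- `ν` is non-expanding on `A = {φ : φ(s) = φ(t)}` and satisfies
`min_{p ∈ X} φ(p) ≤ ν(φ) ≤ max_{p ∈ X} φ(p)` there. -/
theorem stmt15 :
    (∀ φ ψ : Fin 4 → ℝ, φ 2 = φ 3 → ψ 2 = ψ 3 →
      |nu0 φ - nu0 ψ| ≤ ⨆ p, |φ p - ψ p|) ∧
    (∀ φ : Fin 4 → ℝ, φ 2 = φ 3 → (⨅ p, φ p) ≤ nu0 φ ∧ nu0 φ ≤ ⨆ p, φ p) :=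
  ⟨fun φ ψ _ _ => stmt15_general.1 φ ψ, fun φ _ => stmt15_general.2 φ⟩
end
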